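/- Let J* ≥ 0 solve the Bellman equation J*(x) = min_{u∈U(x)} max_{w∈W(x)} [g(x,u,w) + J*(f(x,u,w))], with max_{w∈W(x)} g(x,u,w) ≥ 0 for all feasible (x,u). Let μ*(x) be a minimizer in the Bellman equation. Then for every admissible disturbance sequence w(·) and every horizon k, the closed-loop trajectory x(t+1) = f(x(t), μ*(x(t)), w(t)) satisfies Σ_{t=0}^{k} g(x(t), μ*(x(t)), w(t)) ≤ J*(x₀). In particular the infinite-horizon worst-case cost under policy μ* is at most J*(x₀), which is finite. -/

import Mathlib

theorem stmt19 {X U W : Type*}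
    (Uc : X → Set U) (Wc : X → Set W)
    (g : X → U → W → ℝ) (f : X → U → W → X)
    (hg : ∀ x, ∀ u ∈ Uc x, ∃ M, IsGreatest {z : ℝ | ∃ w ∈ Wc x, z = g x u w} M ∧ 0 ≤ M)
    (Jstar : X → ℝ) (hJstar_nonneg : ∀ x, 0 ≤ Jstar x)
    (hBellman : ∀ x, IsLeast {v : ℝ | ∃ u ∈ Uc x,
        IsGreatest {z : ℝ | ∃ w ∈ Wc x, z = g x u w + Jstar (f x u w)} v} (Jstar x))
    (μ : X → U)
    (hμ_feas : ∀ x, μ x ∈ Uc x)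
    (hμ_opt : ∀ x, IsGreatest {z : ℝ | ∃ w ∈ Wc x,
        z = g x (μ x) w + Jstar (f x (μ x) w)} (Jstar x))
    (x : ℕ → X) (w : ℕ → W)
    (hadm : ∀ t, w t ∈ Wc (x t))
    (hdyn : ∀ t, x (t+1) = f (x t) (μ (x t)) (w t)) :
    ∀ k, ∑ t ∈ Finset.range (k+1), g (x t) (μ (x t)) (w t) ≤ Jstar (x 0) := by
  have step : ∀ t, g (x t) (μ (x t)) (w t) + Jstar (x (t+1)) ≤ Jstar (x t) := by
    intro t
    rw [hdyn t]
    exact (hμ_opt (x t)).2 ⟨w t, hadm t, rfl⟩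
  have key : ∀ n, ∑ t ∈ Finset.range n, g (x t) (μ (x t)) (w t) + Jstar (x n) ≤ Jstar (x 0) := by
    intro n
    induction n with
    | zero => simp
    | succ n ih =>
      rw [Finset.sum_range_succ]
      linarith [step n]
  intro k
  linarith [key (k+1), hJstar_nonneg (x (k+1))]
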